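/- arXiv:1703.10115 — 2 statements merged into one kernel-verified Lean document; each statement's English description precedes it below -/
import Mathlib

section
/- Let φ(τ,z) be a weakly holomorphic Jacobi form of weight k and index m. Then the function F(τ) := Σ_{ℓ=0}^{m-1} φ(τ, ℓ/m) satisfies F|_k[[a,b],[c,d]] = F for every [[a,b],[c,d]] ∈ Γ₀(m), where (F|_k γ)(τ) = (cτ+d)^{-k} F((aτ+b)/(cτ+d)). -/
open Complex Matrix

noncomputable section

/-- `SL(2, ℝ)`. -/
abbrev SL2R := Matrix.SpecialLinearGroup (Fin 2) ℝ

/-- `q = e^{2πiz}` (also used as `ζ = e^{2πiz}`). -/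
def qc (z : ℂ) : ℂ := Complex.exp (2 * Real.pi * Complex.I * z)

/-- The Dedekind eta function `η(z) = q^{1/24} ∏_{n ≥ 1} (1 - q^n)` (intended for `Im z > 0`). -/
def dedekindEta (z : ℂ) : ℂ :=
  Complex.exp (Real.pi * Complex.I * z / 12) *
    ∏' n : ℕ, (1 - Complex.exp (2 * Real.pi * Complex.I * ((n : ℂ) + 1) * z))

/-- The hauptmodul `j_N` of `Γ₀(N)` for `N ∈ {2, 3, 5, 7, 13, 6, 10}`. -/
def jn (N : ℕ) (z : ℂ) : ℂ :=
  if N = 6 then (dedekindEta (2 * z) * dedekindEta (3 * z) ^ 3 / (dedekindEta z * dedekindEta (6 * z) ^ 3)) ^ 3 - 3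
  else if N = 10 then dedekindEta (2 * z) * dedekindEta (5 * z) ^ 5 / (dedekindEta z * dedekindEta (10 * z) ^ 5) - 1
  else (dedekindEta z / dedekindEta ((N : ℂ) * z)) ^ (24 / (N - 1)) + 24 / ((N : ℂ) - 1)

/-- The hauptmodul `j_N^*` of the Fricke group `Γ₀^*(N)` for `N ∈ {2, 3, 5, 7, 13, 6, 10}`. -/
def jnStar (N : ℕ) (z : ℂ) : ℂ :=
  if N = 6 then
    (dedekindEta z * dedekindEta (3 * z) / (dedekindEta (2 * z) * dedekindEta (6 * z))) ^ 6 + 6 +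
      2 ^ 6 * (dedekindEta (2 * z) * dedekindEta (6 * z) / (dedekindEta z * dedekindEta (3 * z))) ^ 6
  else if N = 10 then
    (dedekindEta z * dedekindEta (5 * z) / (dedekindEta (2 * z) * dedekindEta (10 * z))) ^ 4 + 4 +
      2 ^ 4 * (dedekindEta (2 * z) * dedekindEta (10 * z) / (dedekindEta z * dedekindEta (5 * z))) ^ 4
  else
    (dedekindEta z / dedekindEta ((N : ℂ) * z)) ^ (24 / (N - 1)) + 24 / ((N : ℂ) - 1) +
      (N : ℂ) ^ (12 / (N - 1)) * (dedekindEta ((N : ℂ) * z) / dedekindEta z) ^ (24 / (N - 1))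

/-- `f` has the `q`-expansion `f(τ) = Σ_{n ≥ n₀} (a n) q^n` on the upper half-plane. -/
def HasQExp (f : ℂ → ℂ) (a : ℤ → ℂ) (n₀ : ℤ) : Prop :=
  (∀ n < n₀, a n = 0) ∧
    ∀ τ : ℂ, 0 < τ.im →
      HasSum (fun m : ℕ => a (n₀ + m) * qc τ ^ (n₀ + (m : ℤ))) (f τ)

/-- `Γ₀(N)` viewed as a subgroup of `SL(2, ℝ)`. -/
def Gamma0SL2R (N : ℕ) : Subgroup SL2R :=
  (CongruenceSubgroup.Gamma0 N).map
    (Matrix.SpecialLinearGroup.map (Int.castRingHom ℝ))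

/-- The set of Atkin–Lehner matrices `W_e` of level `N`:
`W_e = e^{-1/2} [[xe, y], [zN, we]]`, `x, y, z, w ∈ ℤ` (determinant `1` being automatic). -/
def atkinLehnerSet (N e : ℕ) : Set SL2R :=
  { g | ∃ x y z w : ℤ,
      g.1 = (Real.sqrt e)⁻¹ • !![(x : ℝ) * e, (y : ℝ); (z : ℝ) * N, (w : ℝ) * e] }

/-- The Fricke group `Γ₀^*(N)`, generated by `Γ₀(N)` and all Atkin–Lehner involutions `W_e`
for `e ∣ N` with `gcd(e, N/e) = 1`. -/
def FrickeGroup (N : ℕ) : Subgroup SL2R :=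
  Subgroup.closure
    ((Gamma0SL2R N : Set SL2R) ∪
      ⋃ e ∈ {e : ℕ | e ∣ N ∧ Nat.Coprime e (N / e)}, atkinLehnerSet N e)

/-- The Gram matrix of the integral binary quadratic form `[a, b, c]`. -/
def formMat (a b c : ℤ) : Matrix (Fin 2) (Fin 2) ℝ :=
  !![(a : ℝ), (b : ℝ) / 2; (b : ℝ) / 2, (c : ℝ)]

/-- `𝒬_{d,N}`: positive definite integral binary quadratic forms `[a, b, c]` of
discriminant `-d` with `N ∣ a`. -/
def QdN (d : ℤ) (N : ℕ) : Set (Matrix (Fin 2) (Fin 2) ℝ) :=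
  { M | ∃ a b c : ℤ, M = formMat a b c ∧ 0 < a ∧ b ^ 2 - 4 * a * c = -d ∧ (N : ℤ) ∣ a }

/-- `𝒬_{d,N,h}`: members of `𝒬_{d,N}` with `b ≡ h (mod 2N)`. -/
def QdNh (d : ℤ) (N : ℕ) (h : ℤ) : Set (Matrix (Fin 2) (Fin 2) ℝ) :=
  { M | ∃ a b c : ℤ, M = formMat a b c ∧ 0 < a ∧ b ^ 2 - 4 * a * c = -d ∧ (N : ℤ) ∣ a ∧
      (b : ZMod (2 * N)) = (h : ZMod (2 * N)) }

/-- Orbit relation of the (right) action `Q ↦ Q ∘ g`, i.e. `M ↦ gᵀ M g`, of `Γ ≤ SL(2, ℝ)`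
on a set `S` of Gram matrices of quadratic forms. -/
def formRel (Γ : Subgroup SL2R) (S : Set (Matrix (Fin 2) (Fin 2) ℝ)) (Q Q' : S) : Prop :=
  ∃ g ∈ Γ, Q'.1 = (g.1)ᵀ * Q.1 * g.1

/-- The CM point `α_Q` of a positive definite form (as a point of `ℂ`; it lies in the upper
half-plane): `α_Q = (-b + i √d) / (2a) = (-(b/2) + i √(det M)) / a`. -/
def cmPointC (M : Matrix (Fin 2) (Fin 2) ℝ) : ℂ :=
  ((-(M 0 1) : ℝ) + Complex.I * Real.sqrt M.det) / ((M 0 0 : ℝ) : ℂ)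

/-- The order of the stabilizer of the form `M` in `Γ/{±1}` (the stabilizer in `Γ` contains
`±1` and has twice the cardinality). -/
def stabOrder (Γ : Subgroup SL2R) (M : Matrix (Fin 2) (Fin 2) ℝ) : ℕ :=
  Nat.card { g : SL2R // g ∈ Γ ∧ (g.1)ᵀ * M * g.1 = M } / 2

/-- The modular trace `Σ_{Q ∈ S/Γ} f(α_Q) / |Γ̄_Q|`. -/
def classTrace (Γ : Subgroup SL2R) (f : ℂ → ℂ)
    (S : Set (Matrix (Fin 2) (Fin 2) ℝ)) : ℂ :=
  ∑ᶠ O : Quot (formRel Γ S),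
    f (cmPointC (Quot.out O).1) / (stabOrder Γ (Quot.out O).1 : ℂ)

/-- `t₂^{(N*)}(d)`, where `P` is the polynomial with `φ₂(j_N^*) = P(j_N^*)`;
includes the paper's conventions at nonpositive indices. -/
def t2Star (N : ℕ) (P : Polynomial ℂ) (d : ℤ) : ℂ :=
  if 0 < d then
    classTrace (FrickeGroup N) (fun z => Polynomial.eval (jnStar N z) P) (QdN d N)
  else if d = 0 then (if N = 2 then 5 else if N = 6 ∨ N = 10 then 5 / 2 else 3)
  else if d = -1 then -1
  else if d = -4 then -2
  else 0

/-- `σ₁^{(N)}(x) = Σ_{d ∣ x, N ∤ d} d` for `x ∈ ℤ_{>0}`, `(N-1)/24` at `x = 0`, and `0`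
off `ℤ_{≥0}`. -/
def sigmaN (N : ℕ) (x : ℚ) : ℂ :=
  if x = 0 then ((N : ℂ) - 1) / 24
  else if 0 < x ∧ x.den = 1 then
    ∑ d ∈ (Nat.divisors x.num.toNat).filter (fun d => ¬ N ∣ d), (d : ℂ)
  else 0

/-- `σ₁(x) = Σ_{d ∣ x} d` for `x ∈ ℤ_{>0}` and `0` otherwise. -/
def sigmaQ (x : ℚ) : ℂ :=
  if 0 < x ∧ x.den = 1 then ∑ d ∈ Nat.divisors x.num.toNat, (d : ℂ) else 0

/-- A weakly holomorphic Jacobi form of weight `k` and index `m`. -/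
structure WeakJacobiForm (k : ℤ) (m : ℕ) where
  toFun : ℂ → ℂ → ℂ
  holo : DifferentiableOn ℂ (fun p : ℂ × ℂ => toFun p.1 p.2)
      ({τ : ℂ | 0 < τ.im} ×ˢ (Set.univ : Set ℂ))
  slash_inv : ∀ a b c d : ℤ, a * d - b * c = 1 → ∀ τ z : ℂ, 0 < τ.im →
    ((c : ℂ) * τ + d) ^ (-k) *
        Complex.exp (-(2 * Real.pi * Complex.I * m * c * z ^ 2) / ((c : ℂ) * τ + d)) *
        toFun (((a : ℂ) * τ + b) / ((c : ℂ) * τ + d)) (z / ((c : ℂ) * τ + d)) =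
      toFun τ z
  elliptic : ∀ lm mu : ℤ, ∀ τ z : ℂ, 0 < τ.im →
    Complex.exp (2 * Real.pi * Complex.I * m * ((lm : ℂ) ^ 2 * τ + 2 * lm * z)) *
        toFun τ (z + lm * τ + mu) = toFun τ z
  coeff : ℤ → ℤ → ℂ
  coeff_neg_finite : {n : ℤ | n < 0 ∧ ∃ r : ℤ, coeff n r ≠ 0}.Finite
  expansion : ∀ τ z : ℂ, 0 < τ.im →
    HasSum (fun p : ℤ × ℤ => coeff p.1 p.2 * qc τ ^ p.1 * qc z ^ p.2) (toFun τ z)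

/-- Meromorphy of weight `k` at all cusps: at each cusp `γ∞`, the function `F|_k γ` has a
Fourier expansion in fractional powers of `q` with only finitely many negative terms. -/
def MeromAtCusps (k : ℤ) (F : ℂ → ℂ) : Prop :=
  ∀ a b c d : ℤ, a * d - b * c = 1 →
    ∃ (M : ℕ) (cs : ℤ → ℂ) (n₀ : ℤ), 0 < M ∧
      ∀ τ : ℂ, 0 < τ.im →
        HasSum
          (fun j : ℕ => cs (n₀ + j) *
            Complex.exp (2 * Real.pi * Complex.I * τ / M) ^ (n₀ + (j : ℤ)))
          (((c : ℂ) * τ + d) ^ (-k) * F (((a : ℂ) * τ + b) / ((c : ℂ) * τ + d)))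

/-- The Möbius action of an element of `SL(2, ℝ)` on `ℂ`. -/
def moebius (g : SL2R) (z : ℂ) : ℂ :=
  ((g.1 0 0 : ℝ) * z + ((g.1 0 1 : ℝ) : ℂ)) / ((g.1 1 0 : ℝ) * z + ((g.1 1 1 : ℝ) : ℂ))

/-- A weakly holomorphic modular function on `Γ`: holomorphic on the upper half-plane,
`Γ`-invariant, with poles only at the cusps. -/
def IsWeaklyHolModularFn (Γ : Subgroup SL2R) (f : ℂ → ℂ) : Prop :=
  DifferentiableOn ℂ f {z : ℂ | 0 < z.im} ∧
    (∀ g ∈ Γ, ∀ z : ℂ, 0 < z.im → f (moebius g z) = f z) ∧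
    MeromAtCusps 0 f

/-- The set `L_{h, d/4N}` of vectors
`X = [[b + h/2N, c/N], [-a, -(b + h/2N)]]`, `a, b, c ∈ ℤ`, of norm `q(X) = d/4N`. -/
def LhSet (N : ℕ) (h d : ℤ) : Set (Matrix (Fin 2) (Fin 2) ℝ) :=
  { X | ∃ a b c : ℤ,
      X = !![(b : ℝ) + (h : ℝ) / (2 * N), (c : ℝ) / N;
             -(a : ℝ), -((b : ℝ) + (h : ℝ) / (2 * N))] ∧
      (2 * b * N + h) ^ 2 - 4 * a * c * N = -d }

/-- The map `X ↦ N ⬝ [[0,-1],[1,0]] ⬝ X` from vectors to Gram matrices of quadratic forms. -/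
def vecToForm (N : ℕ) (X : Matrix (Fin 2) (Fin 2) ℝ) : Matrix (Fin 2) (Fin 2) ℝ :=
  (N : ℝ) • (!![(0 : ℝ), -1; 1, 0] * X)

/-- Orbit relation of `Γ` acting by conjugation `g.X = g X g⁻¹` on a set `S` of vectors. -/
def vecRel (Γ : Subgroup SL2R) (S : Set (Matrix (Fin 2) (Fin 2) ℝ)) (X X' : S) : Prop :=
  ∃ g ∈ Γ, X'.1 = g.1 * X.1 * (g⁻¹).1

/-- The Heegner point `D_X ∈ ℍ` of a vector `X` of positive norm. -/
def heegnerC (X : Matrix (Fin 2) (Fin 2) ℝ) : ℂ :=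
  ((X 0 0 / X 1 0 : ℝ) : ℂ) + Complex.I * Real.sqrt (X.det / (X 1 0) ^ 2)

/-- The order of the stabilizer of the vector `X` in `Γ/{±1}`. -/
def vecStabOrder (Γ : Subgroup SL2R) (X : Matrix (Fin 2) (Fin 2) ℝ) : ℕ :=
  Nat.card { g : SL2R // g ∈ Γ ∧ g.1 * X * (g⁻¹).1 = X } / 2

/-- The modular trace `t_f(h, m) = Σ_{X ∈ Γ\L_{h,m}} f(D_X) / |Γ̄_X|`. -/
def vecTrace (Γ : Subgroup SL2R) (f : ℂ → ℂ) (S : Set (Matrix (Fin 2) (Fin 2) ℝ)) : ℂ :=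
  ∑ᶠ O : Quot (vecRel Γ S), f (heegnerC (Quot.out O).1) / (vecStabOrder Γ (Quot.out O).1 : ℂ)

/-- The weight-2 Eisenstein series `E₂(z) = 1 - 24 Σ_{n ≥ 1} σ₁(n) qⁿ`. -/
def E2 (z : ℂ) : ℂ :=
  1 - 24 * ∑' n : ℕ, (∑ d ∈ Nat.divisors (n + 1), (d : ℂ)) * qc z ^ (n + 1)

/-- `E₂^{(N)}(z) = N E₂(Nz) - E₂(z)`. -/
def E2N (N : ℕ) (z : ℂ) : ℂ := (N : ℂ) * E2 ((N : ℂ) * z) - E2 z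

end

/-!
Consider a level `N ∣ c`, the theorem being the case `N = m`. Let `x = ℓ/N`, so that `λ = cx` is
an integer, and write `e(w) = exp(2πiw)`. Since `x(cτ + d) = λτ + dx`, the value
`φ(γτ, x)` is related by modularity to `φ(τ, x(cτ + d))`, and by translation along `λτ` to
`φ(τ, dx)`. The two automorphy factors combine to `e(m c d x²)`, which is trivial as soon as
`N² ∣ mc`. So `γ` carries the torsion value at `ℓ/N` to the one at `dℓ/N`, and as `d` is a unit
modulo `N` this only permutes the terms of the sum.
-/

theorem sum_range_natCast_eq_sum_zmod {M : Type*} [AddCommMonoid M] (N : ℕ) [NeZero N]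
    (g : ZMod N → M) : ∑ l ∈ Finset.range N, g l = ∑ x : ZMod N, g x := by
  refine Finset.sum_bij' (fun l _ ↦ (l : ZMod N)) (fun x _ ↦ x.val) ?_ ?_ ?_ ?_ ?_ <;>
    simp +contextual [ZMod.val_lt, Nat.mod_eq_of_lt]

theorem sum_range_mul_of_periodic {M : Type*} [AddCommMonoid M] {N : ℕ} [NeZero N] {f : ℤ → M}
    (hf : Function.Periodic f N) {d : ℤ} (hd : IsCoprime d N) :
    ∑ l ∈ Finset.range N, f (d * l) = ∑ l ∈ Finset.range N, f l := by
  let g (x : ZMod N) : M := f x.val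
  have hg (n : ℤ) : g n = f n := by
    simp only [g, ZMod.val_intCast, Int.emod_def, mul_comm (N : ℤ)]
    exact hf.sub_int_mul_eq _
  obtain ⟨u, hu⟩ := (ZMod.coe_int_isUnit_iff_isCoprime d N).mpr hd.symm
  calc ∑ l ∈ Finset.range N, f (d * l)
    _ = ∑ l ∈ Finset.range N, g (u * (l : ZMod N)) := by simp [← hg, hu]
    _ = ∑ x : ZMod N, g (u * x) := sum_range_natCast_eq_sum_zmod N fun x ↦ g (u * x)
    _ = ∑ x : ZMod N, g x := Equiv.sum_comp (Units.mulLeft u) g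
    _ = ∑ l ∈ Finset.range N, g (l : ZMod N) := (sum_range_natCast_eq_sum_zmod N g).symm
    _ = ∑ l ∈ Finset.range N, f l := by simp [← hg]

theorem periodic_intCast_div_of_periodic_one {K α : Type*} [DivisionRing K] [CharZero K]
    {f : K → α} (hf : Function.Periodic f 1) (N : ℕ) [NeZero N] :
    Function.Periodic (fun l : ℤ ↦ f (l / N)) N := fun l ↦ by
  simpa [add_div, NeZero.ne] using hf (l / N)

theorem intCast_mul_add_intCast_ne_zero {c d : ℤ} (hcd : IsCoprime c d) {τ : ℂ}
    (hτ : τ.im ≠ 0) : (c : ℂ) * τ + d ≠ 0 := by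
  have hne : ![(c : ℝ), (d : ℝ)] ≠ 0 := (hcd.map (Int.castRingHom ℝ)).ne_zero (p := ![_, _])
  simpa using UpperHalfPlane.linear_ne_zero_of_im hτ hne

noncomputable section

/-- The modular slash operator `φ|_{k,m}[[a, b], [c, d]]` on functions of `(τ, z)`. The
entries are arbitrary integers, so this is the action of a group only in determinant one. -/
def jacobiSlash (k m a b c d : ℤ) (φ : ℂ → ℂ → ℂ) (τ z : ℂ) : ℂ :=
  ((c : ℂ) * τ + d) ^ (-k) *
      exp (-(2 * Real.pi * I * m * c * z ^ 2) / ((c : ℂ) * τ + d)) *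
    φ (((a : ℂ) * τ + b) / ((c : ℂ) * τ + d)) (z / ((c : ℂ) * τ + d))

/-- The elliptic slash operator `φ|_m[r, s]` on functions of `(τ, z)`, translating `z` by the
lattice point `rτ + s`. -/
def ellipticSlash (m r s : ℤ) (φ : ℂ → ℂ → ℂ) (τ z : ℂ) : ℂ :=
  exp (2 * Real.pi * I * m * ((r : ℂ) ^ 2 * τ + 2 * r * z)) * φ τ (z + r * τ + s)

/-- The sum of `φ(τ, ·)` over the real `N`-torsion points `ℓ/N` of `ℂ/(ℤτ + ℤ)`;
for `N = m` this is the function `F` attached to a Jacobi form of index `m`. -/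
def torsionSum (N : ℕ) (φ : ℂ → ℂ → ℂ) (τ : ℂ) : ℂ :=
  ∑ l ∈ Finset.range N, φ τ ((l : ℂ) / N)

end

section JacobiInvariance

variable {k m a b c d : ℤ} {N : ℕ} {φ : ℂ → ℂ → ℂ} {τ : ℂ}

theorem periodic_one_of_ellipticSlash_eq (hell : ∀ z, ellipticSlash m 0 1 φ τ z = φ τ z) :
    Function.Periodic (φ τ) 1 := fun z ↦ by
  simpa [ellipticSlash] using hell z

theorem exp_mul_slash_eq_of_mul_eq_intCast
    (hslash : ∀ z, jacobiSlash k m a b c d φ τ z = φ τ z)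
    {r : ℤ} (hell : ∀ z, ellipticSlash m r 0 φ τ z = φ τ z)
    (hJ : (c : ℂ) * τ + d ≠ 0) {x : ℂ} (hr : c * x = r) :
    exp (2 * Real.pi * I * m * c * d * x ^ 2) *
        (((c : ℂ) * τ + d) ^ (-k) * φ (((a : ℂ) * τ + b) / ((c : ℂ) * τ + d)) x) =
      φ τ (d * x) := by
  set J : ℂ := c * τ + d with hJ_def
  have hmodular : J ^ (-k) * exp (-(2 * Real.pi * I * m * c * x ^ 2 * J)) *
      φ ((a * τ + b) / J) x = φ τ (x * J) := by
    rw [← hslash, jacobiSlash, ← hJ_def, mul_div_cancel_right₀ x hJ]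
    congr 3
    field_simp
  have htranslate : exp (2 * Real.pi * I * m * ((r : ℂ) ^ 2 * τ + 2 * r * (d * x))) *
      φ τ (x * J) = φ τ (d * x) := by
    rw [← hell (d * x), ellipticSlash, ← hr, hJ_def]
    congr 2
    push_cast
    ring
  have hfactor : exp (2 * Real.pi * I * m * c * d * x ^ 2) =
      exp (2 * Real.pi * I * m * ((r : ℂ) ^ 2 * τ + 2 * r * (d * x))) *
        exp (-(2 * Real.pi * I * m * c * x ^ 2 * J)) := by
    rw [← exp_add, ← hr, hJ_def]
    congr 1
    ring
  rw [← htranslate, ← hmodular, hfactor]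
  ring

theorem exp_index_mul_torsion_sq_eq_one [NeZero N] (hmc : (N : ℤ) ^ 2 ∣ m * c) (l : ℤ) :
    exp (2 * Real.pi * I * m * c * d * ((l : ℂ) / N) ^ 2) = 1 := by
  obtain ⟨e, he⟩ := hmc
  have he' : (m : ℂ) * c = N ^ 2 * e := mod_cast he
  rw [exp_eq_one_iff]
  refine ⟨e * d * l ^ 2, ?_⟩
  have hN : (N : ℂ) ≠ 0 := NeZero.ne _
  push_cast
  field_simp
  linear_combination (d * l ^ 2 : ℂ) * he'

theorem slash_torsion_value [NeZero N]
    (hslash : ∀ z, jacobiSlash k m a b c d φ τ z = φ τ z)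
    (hell : ∀ r z, ellipticSlash m r 0 φ τ z = φ τ z)
    (hJ : (c : ℂ) * τ + d ≠ 0) (hc : (N : ℤ) ∣ c) (hmc : (N : ℤ) ^ 2 ∣ m * c) (l : ℤ) :
    ((c : ℂ) * τ + d) ^ (-k) * φ (((a : ℂ) * τ + b) / ((c : ℂ) * τ + d)) ((l : ℂ) / N) =
      φ τ (((d * l : ℤ) : ℂ) / N) := by
  obtain ⟨e, he⟩ := hc
  have hr : (c : ℂ) * ((l : ℂ) / N) = (e * l : ℤ) := by
    have hN : (N : ℂ) ≠ 0 := NeZero.ne _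
    rw [he]
    push_cast
    field_simp
  have htorsion := exp_mul_slash_eq_of_mul_eq_intCast hslash (hell _) hJ hr
  rwa [exp_index_mul_torsion_sq_eq_one hmc, one_mul, ← mul_div_assoc, ← Int.cast_mul] at htorsion

theorem jacobi_average_slash_invariant_general [NeZero N] (hdet : a * d - b * c = 1)
    (hτ : 0 < τ.im)
    (hslash : ∀ z, jacobiSlash k m a b c d φ τ z = φ τ z)
    (hell : ∀ r s z, ellipticSlash m r s φ τ z = φ τ z)
    (hc : (N : ℤ) ∣ c) (hmc : (N : ℤ) ^ 2 ∣ m * c) :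
    ((c : ℂ) * τ + d) ^ (-k) * torsionSum N φ (((a : ℂ) * τ + b) / ((c : ℂ) * τ + d)) =
      torsionSum N φ τ := by
  have hcd : IsCoprime c d := ⟨-b, a, by linear_combination hdet⟩
  have hJ : (c : ℂ) * τ + d ≠ 0 := intCast_mul_add_intCast_ne_zero hcd hτ.ne'
  have hperiodic : Function.Periodic (φ τ) 1 := periodic_one_of_ellipticSlash_eq (hell 0 1)
  have hdN : IsCoprime d N := (hcd.of_isCoprime_of_dvd_left hc).symm
  calc ((c : ℂ) * τ + d) ^ (-k) * torsionSum N φ (((a : ℂ) * τ + b) / ((c : ℂ) * τ + d))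
    _ = ∑ l ∈ Finset.range N, φ τ (((d * l : ℤ) : ℂ) / N) := by
      rw [torsionSum, Finset.mul_sum]
      exact Finset.sum_congr rfl fun l _ ↦ by
        simpa using slash_torsion_value hslash (hell · 0) hJ hc hmc l
    _ = torsionSum N φ τ := by
      simpa [torsionSum] using
        sum_range_mul_of_periodic (periodic_intCast_div_of_periodic_one hperiodic N) hdN

end JacobiInvariance

namespace WeakJacobiForm

variable {k : ℤ} {m : ℕ} (φ : WeakJacobiForm k m) {τ : ℂ}

theorem jacobiSlash_eq {a b c d : ℤ} (hdet : a * d - b * c = 1) (hτ : 0 < τ.im) (z : ℂ) :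
    jacobiSlash k m a b c d φ.toFun τ z = φ.toFun τ z := by
  simpa only [jacobiSlash, Int.cast_natCast] using φ.slash_inv a b c d hdet τ z hτ

theorem ellipticSlash_eq (hτ : 0 < τ.im) (r s : ℤ) (z : ℂ) :
    ellipticSlash m r s φ.toFun τ z = φ.toFun τ z := by
  simpa only [ellipticSlash, Int.cast_natCast] using φ.elliptic r s τ z hτ

end WeakJacobiForm

/-- **First step in the proof of Lemma 2.2.** For a weakly holomorphic Jacobi form `φ` of
weight `k` and index `m`, the function `F(τ) = Σ_{ℓ=0}^{m-1} φ(τ, ℓ/m)` satisfies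
`F|_k γ = F` for every `γ ∈ Γ₀(m)`. -/
theorem jacobi_average_slash_invariant (k : ℤ) (m : ℕ) (hm : 0 < m)
    (φ : WeakJacobiForm k m)
    (a b c d : ℤ) (hdet : a * d - b * c = 1) (hc : (m : ℤ) ∣ c)
    (τ : ℂ) (hτ : 0 < τ.im) :
    ((c : ℂ) * τ + d) ^ (-k) *
        ∑ ℓ ∈ Finset.range m,
          φ.toFun (((a : ℂ) * τ + b) / ((c : ℂ) * τ + d)) ((ℓ : ℂ) / (m : ℂ)) =
      ∑ ℓ ∈ Finset.range m, φ.toFun τ ((ℓ : ℂ) / (m : ℂ)) := by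
  have : NeZero m := ⟨hm.ne'⟩
  exact jacobi_average_slash_invariant_general hdet hτ (φ.jacobiSlash_eq hdet hτ)
    (φ.ellipticSlash_eq hτ) hc (sq (m : ℤ) ▸ mul_dvd_mul_left _ hc)
end

section
/- Let p be a prime, d a positive integer with p ∤ d, and h an integer mod 2p with h² ≡ -d (mod 4p). Then the inclusion 𝒬_{d,p,h} ⊂ 𝒬_{d,p} induces a bijection 𝒬_{d,p,h}/Γ₀(p) → 𝒬_{d,p}/Γ₀*(p), and this bijection preserves the orders of the stabilizers in Γ₀(p)/{±I} and Γ₀*(p)/{±I} respectively. -/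
open Complex Matrix

/-!
For any level `N`, the Fricke group `Γ₀*(N)` is the union of the Atkin–Lehner sets `W_e`, `e ∣ N`,
and `W_1 = Γ₀(N)`. If `N = ef`, an element of `W_e` sends a form with middle coefficient `b` to one
whose middle coefficient is `≡ -b (mod 2e)` and `≡ b (mod 2f)`. For `N` coprime to `d`, every such
`b` is invertible modulo `N`, so only `W_1` can relate two forms of `𝒬_{d,N,h}`: this gives
injectivity and the equality of the stabilizers. Conversely `h² ≡ b² (mod 4N)` factors `N = ef` into
coprime parts with `h ≡ -b (mod 2e)` and `h ≡ b (mod 2f)`, so `W_e` carries any form of `𝒬_{d,N}`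
into `𝒬_{d,N,h}`, which gives surjectivity.
-/

lemma formMat_inj {a b c a' b' c' : ℤ} :
    formMat a b c = formMat a' b' c' ↔ a = a' ∧ b = b' ∧ c = c' := by
  refine ⟨fun h => ⟨?_, ?_, ?_⟩, by rintro ⟨rfl, rfl, rfl⟩; rfl⟩
  · simpa [formMat] using congr($h 0 0)
  · simpa [formMat] using congr($h 0 1)
  · simpa [formMat] using congr($h 1 1)

lemma det_formMat (a b c : ℤ) : (formMat a b c).det = -((b ^ 2 - 4 * a * c : ℤ) : ℝ) / 4 := by
  rw [formMat, det_fin_two_of]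
  push_cast
  ring

section SL2R

variable {g : SL2R} {a b c a' b' c' : ℤ}

lemma discr_eq_of_formMat_eq (h : formMat a' b' c' = (g.1)ᵀ * formMat a b c * g.1) :
    b' ^ 2 - 4 * a' * c' = b ^ 2 - 4 * a * c := by
  have hdet := congr(det $h)
  rw [det_mul, det_mul, det_transpose, g.2, one_mul, mul_one, det_formMat, det_formMat,
    div_left_inj' four_ne_zero, neg_inj] at hdet
  exact_mod_cast hdet

lemma leading_coeff_pos_of_formMat_eq (h : formMat a' b' c' = (g.1)ᵀ * formMat a b c * g.1)
    (ha : 0 < a) (hdisc : b ^ 2 - 4 * a * c < 0) : 0 < a' := by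
  have : (0 : ℝ) < a := by exact_mod_cast ha
  have hdiscR : (b : ℝ) ^ 2 - 4 * a * c < 0 := by exact_mod_cast hdisc
  have hdet : g.1 0 0 * g.1 1 1 - g.1 0 1 * g.1 1 0 = 1 := (det_fin_two g.1).symm.trans g.2
  have ha' : (a' : ℝ) = a * g.1 0 0 ^ 2 + b * g.1 0 0 * g.1 1 0 + c * g.1 1 0 ^ 2 := by
    have h00 := congr($h 0 0)
    simp only [formMat, mul_apply, Fin.sum_univ_two, transpose_apply, of_apply, cons_val',
      cons_val_zero, cons_val_one, cons_val_fin_one] at h00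
    linear_combination h00
  have hsq : 4 * (a : ℝ) * a' =
      (2 * a * g.1 0 0 + b * g.1 1 0) ^ 2 + -(b ^ 2 - 4 * a * c) * g.1 1 0 ^ 2 := by
    rw [ha']
    ring
  suffices hpos : (0 : ℝ) < 4 * a * a' by
    exact_mod_cast pos_of_mul_pos_right hpos (by positivity : (0 : ℝ) ≤ 4 * a)
  rw [hsq]
  rcases eq_or_ne (g.1 1 0) 0 with h10 | h10
  · have h00 : g.1 0 0 ≠ 0 := by
      intro h00
      simp [h00, h10] at hdet
    rw [h10]
    have : 2 * (a : ℝ) * g.1 0 0 ≠ 0 := by positivity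
    simpa using sq_pos_of_ne_zero this
  · exact add_pos_of_nonneg_of_pos (sq_nonneg _) (mul_pos (neg_pos.2 hdiscR) (by positivity))

end SL2R

lemma formRel_equivalence (Γ : Subgroup SL2R) (S : Set (Matrix (Fin 2) (Fin 2) ℝ)) :
    Equivalence (formRel Γ S) where
  refl _ := ⟨1, one_mem _, by simp⟩
  symm := by
    rintro Q Q' ⟨g, hg, h⟩
    refine ⟨g⁻¹, inv_mem hg, ?_⟩
    have hinv : g.1 * (g⁻¹).1 = 1 := congr(Subtype.val $(mul_inv_cancel g))
    calc
      Q.1 = (g.1 * (g⁻¹).1)ᵀ * Q.1 * (g.1 * (g⁻¹).1) := by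
        rw [hinv, transpose_one, Matrix.one_mul, Matrix.mul_one]
      _ = ((g⁻¹).1)ᵀ * Q'.1 * (g⁻¹).1 := by simp only [h, transpose_mul, Matrix.mul_assoc]
  trans := by
    rintro Q Q' Q'' ⟨g, hg, h⟩ ⟨k, hk, h'⟩
    refine ⟨g * k, mul_mem hg hk, ?_⟩
    simp only [h', h, Matrix.SpecialLinearGroup.coe_mul, transpose_mul, Matrix.mul_assoc]

lemma stabOrder_congr {Γ Γ' : Subgroup SL2R} {M : Matrix (Fin 2) (Fin 2) ℝ}
    (h : ∀ g : SL2R, (g.1)ᵀ * M * g.1 = M → (g ∈ Γ ↔ g ∈ Γ')) :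
    stabOrder Γ M = stabOrder Γ' M := by
  simp only [stabOrder, and_congr_left (h _)]

/-- The real matrix `e^{-1/2} [[xe, y], [zef, we]]`, the shape of the elements of
`atkinLehnerSet (e * f) e`. Writing the level as `N = ef` avoids the quotient `N / e`. -/
noncomputable def atkinLehnerMatrix (e f : ℕ) (x y z w : ℤ) : Matrix (Fin 2) (Fin 2) ℝ :=
  (Real.sqrt e)⁻¹ • !![(x : ℝ) * e, (y : ℝ); (z : ℝ) * (e * f : ℕ), (w : ℝ) * e]

lemma det_atkinLehnerMatrix {e : ℕ} (he : 0 < e) (f : ℕ) (x y z w : ℤ) :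
    (atkinLehnerMatrix e f x y z w).det = ((x * w * e - y * z * f : ℤ) : ℝ) := by
  rw [atkinLehnerMatrix, det_smul, det_fin_two_of, Fintype.card_fin, inv_pow,
    Real.sq_sqrt e.cast_nonneg]
  push_cast
  field_simp

lemma transpose_mul_formMat_mul_atkinLehnerMatrix {e : ℕ} (he : 0 < e) (f : ℕ)
    (x y z w m b c : ℤ) :
    (atkinLehnerMatrix e f x y z w)ᵀ * formMat ((e * f : ℕ) * m) b c *
        atkinLehnerMatrix e f x y z w =
      formMat ((e * f : ℕ) * (e * m * x ^ 2 + b * x * z + f * c * z ^ 2))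
        (2 * e * f * m * x * y + b * (x * w * e + y * z * f) + 2 * e * f * c * z * w)
        (f * m * y ^ 2 + b * y * w + e * c * w ^ 2) := by
  rw [atkinLehnerMatrix, transpose_smul, Matrix.smul_mul, Matrix.smul_mul, Matrix.mul_smul,
    smul_smul, ← mul_inv, Real.mul_self_sqrt e.cast_nonneg, inv_smul_eq_iff₀ (by positivity)]
  ext i j
  fin_cases i <;> fin_cases j <;> simp [formMat, mul_apply, Fin.sum_univ_two] <;> ring

section AtkinLehner

variable {N e f : ℕ} {g k : SL2R}

lemma exists_det_eq_one_of_mem_atkinLehnerSet (he : 0 < e)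
    (hg : g ∈ atkinLehnerSet (e * f) e) : ∃ x y z w : ℤ,
      x * w * e - y * z * f = 1 ∧ g.1 = atkinLehnerMatrix e f x y z w := by
  obtain ⟨x, y, z, w, hg⟩ := hg
  refine ⟨x, y, z, w, ?_, hg⟩
  exact_mod_cast (det_atkinLehnerMatrix he f x y z w).symm.trans (congr(det $hg).symm.trans g.2)

lemma nonempty_atkinLehnerSet_iff (he : 0 < e) :
    (atkinLehnerSet (e * f) e).Nonempty ↔ e.Coprime f := by
  rw [← Nat.isCoprime_iff_coprime]
  constructor
  · rintro ⟨g, hg⟩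
    obtain ⟨x, y, z, w, hdet, -⟩ := exists_det_eq_one_of_mem_atkinLehnerSet he hg
    exact ⟨x * w, -(y * z), by linear_combination hdet⟩
  · rintro ⟨w, y, hwy⟩
    refine ⟨⟨atkinLehnerMatrix e f 1 (-y) 1 w, ?_⟩, 1, -y, 1, w, rfl⟩
    rw [det_atkinLehnerMatrix he]
    exact_mod_cast show 1 * w * e - -y * 1 * f = 1 by linear_combination hwy

lemma exists_formMat_eq_of_mem_atkinLehnerSet (he : 0 < e) (hg : g ∈ atkinLehnerSet (e * f) e)
    (m b c : ℤ) : ∃ m' b' c' : ℤ,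
      formMat ((e * f : ℕ) * m') b' c' = (g.1)ᵀ * formMat ((e * f : ℕ) * m) b c * g.1 ∧
        (2 * e : ℤ) ∣ b' + b ∧ (2 * f : ℤ) ∣ b' - b := by
  obtain ⟨x, y, z, w, hdet, hg⟩ := exists_det_eq_one_of_mem_atkinLehnerSet he hg
  refine ⟨_, _, _,
    (hg ▸ transpose_mul_formMat_mul_atkinLehnerMatrix he f x y z w m b c).symm, ?_, ?_⟩
  · exact ⟨f * m * x * y + b * x * w + f * c * z * w, by linear_combination (-b) * hdet⟩
  · exact ⟨e * m * x * y + b * y * z + e * c * z * w, by linear_combination b * hdet⟩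

lemma coe_Gamma0SL2R (N : ℕ) : (Gamma0SL2R N : Set SL2R) = atkinLehnerSet N 1 := by
  ext g
  constructor
  · rintro ⟨γ, hγ, rfl⟩
    obtain ⟨z, hz⟩ := (ZMod.intCast_zmod_eq_zero_iff_dvd _ _).1
      (CongruenceSubgroup.Gamma0_mem.1 hγ)
    refine ⟨γ.1 0 0, γ.1 0 1, z, γ.1 1 1, ?_⟩
    ext i j
    fin_cases i <;> fin_cases j <;> simp [hz, mul_comm]
  · rintro ⟨x, y, z, w, hg⟩
    have hdet : (!![x, y; z * N, w]).det = 1 := by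
      have hdetR := g.2
      rw [hg] at hdetR
      simp only [det_fin_two_of, Nat.cast_one, Real.sqrt_one, inv_one, one_smul, mul_one]
        at hdetR ⊢
      exact_mod_cast hdetR
    obtain ⟨γ, hγ⟩ : ∃ γ : Matrix.SpecialLinearGroup (Fin 2) ℤ, γ.1 = !![x, y; z * N, w] :=
      ⟨⟨_, hdet⟩, rfl⟩
    refine ⟨γ, CongruenceSubgroup.Gamma0_mem.2 (by simp [hγ]), Subtype.ext ?_⟩
    rw [Matrix.SpecialLinearGroup.map_apply_coe, hγ, hg]
    ext i j
    fin_cases i <;> fin_cases j <;> simp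

lemma inv_mem_atkinLehnerSet (hg : g ∈ atkinLehnerSet N e) : g⁻¹ ∈ atkinLehnerSet N e := by
  obtain ⟨x, y, z, w, hg⟩ := hg
  refine ⟨w, -y, -z, x, ?_⟩
  rw [Matrix.SpecialLinearGroup.coe_inv, hg, adjugate_fin_two]
  ext i j
  fin_cases i <;> fin_cases j <;> simp

lemma mul_mem_atkinLehnerSet {r s t : ℕ} (hr : 0 < r) (hN : s * t * r ∣ N)
    (hg : g ∈ atkinLehnerSet N (s * r)) (hk : k ∈ atkinLehnerSet N (t * r)) :
    g * k ∈ atkinLehnerSet N (s * t) := by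
  obtain ⟨n, rfl⟩ := hN
  obtain ⟨x, y, z, w, hg⟩ := hg
  obtain ⟨x', y', z', w', hk⟩ := hk
  have hsqrt : Real.sqrt (s * r : ℕ) * Real.sqrt (t * r : ℕ) = Real.sqrt (s * t : ℕ) * r := by
    push_cast
    rw [← Real.sqrt_mul (by positivity), show (s * r * (t * r) : ℝ) = s * t * r ^ 2 by ring,
      Real.sqrt_mul (by positivity), Real.sqrt_sq r.cast_nonneg]
  refine ⟨r * x * x' + n * y * z', s * x * y' + t * y * w', t * z * x' + s * w * z',
    r * w * w' + n * z * y', ?_⟩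
  rw [Matrix.SpecialLinearGroup.coe_mul, hg, hk, Matrix.smul_mul, Matrix.mul_smul, smul_smul,
    ← mul_inv, hsqrt, mul_inv, mul_smul]
  congr 1
  rw [inv_smul_eq_iff₀ (by positivity)]
  ext i j
  fin_cases i <;> fin_cases j <;> simp [mul_apply, Fin.sum_univ_two] <;> ring

lemma mem_FrickeGroup_iff (hN : 0 < N) :
    g ∈ FrickeGroup N ↔ ∃ e, e ∣ N ∧ g ∈ atkinLehnerSet N e := by
  constructor
  · intro hg
    induction hg using Subgroup.closure_induction with
    | mem g hg =>
      rcases hg with hg | hg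
      · exact ⟨1, one_dvd N, coe_Gamma0SL2R N ▸ hg⟩
      · obtain ⟨e, ⟨he, -⟩, hg⟩ := Set.mem_iUnion₂.1 hg
        exact ⟨e, he, hg⟩
    | one => exact ⟨1, one_dvd N, coe_Gamma0SL2R N ▸ one_mem (Gamma0SL2R N)⟩
    | mul g k _ _ hg hk =>
      obtain ⟨e, he, hg⟩ := hg
      obtain ⟨f, hf, hk⟩ := hk
      obtain ⟨r, s, t, hr, hst, rfl, rfl⟩ :=
        Nat.exists_coprime' (Nat.gcd_pos_of_pos_left f (Nat.pos_of_dvd_of_pos he hN))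
      have hlcm : s * t * r ∣ N := by
        rw [← hst.lcm_eq_mul, ← Nat.lcm_mul_right]
        exact Nat.lcm_dvd he hf
      exact ⟨s * t, (dvd_mul_right _ r).trans hlcm, mul_mem_atkinLehnerSet hr hlcm hg hk⟩
    | inv g _ hg => exact hg.imp fun e he => ⟨he.1, inv_mem_atkinLehnerSet he.2⟩
  · rintro ⟨e, ⟨f, rfl⟩, hg⟩
    have he : 0 < e := Nat.pos_of_mul_pos_right hN
    refine Subgroup.subset_closure (Or.inr (Set.mem_biUnion ⟨dvd_mul_right e f, ?_⟩ hg))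
    rw [Nat.mul_div_cancel_left f he]
    exact (nonempty_atkinLehnerSet_iff he).1 ⟨g, hg⟩

lemma Gamma0SL2R_le_FrickeGroup (N : ℕ) : Gamma0SL2R N ≤ FrickeGroup N :=
  fun _ hg => Subgroup.subset_closure (Or.inl hg)

end AtkinLehner

lemma isCoprime_middle_coeff {R : Type*} [CommRing R] {N a b c d : R} (hNd : IsCoprime N d)
    (ha : N ∣ a) (hdisc : b ^ 2 - 4 * a * c = -d) : IsCoprime N b := by
  obtain ⟨m, rfl⟩ := ha
  have hd : -d + N * (4 * m * c) = b ^ 2 := by linear_combination -hdisc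
  rw [← IsCoprime.pow_right_iff two_pos, ← hd]
  exact hNd.neg_right.add_mul_left_right _

lemma exists_coprime_mul_eq_of_four_mul_dvd_sq_sub_sq {N : ℕ} {b h : ℤ}
    (hNb : IsCoprime (N : ℤ) b) (hdvd : (4 * N : ℤ) ∣ h ^ 2 - b ^ 2) :
    ∃ e f : ℕ, N = e * f ∧ e.Coprime f ∧ (2 * e : ℤ) ∣ h + b ∧ (2 * f : ℤ) ∣ h - b := by
  have hpar : Even (h - b) := by
    have h2 : Even (h ^ 2 - b ^ 2) :=
      even_iff_two_dvd.2 ((Dvd.intro (2 * N : ℤ) (by ring)).trans hdvd)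
    simpa only [Int.even_sub, Int.even_pow' two_ne_zero] using h2
  obtain ⟨u, hu⟩ := even_iff_two_dvd.1 hpar
  obtain ⟨v, hv⟩ : ∃ v, h + b = 2 * v := ⟨u + b, by linear_combination hu⟩
  have hprod : h ^ 2 - b ^ 2 = 4 * (v * u) := by linear_combination (h + b) * hu + 2 * u * hv
  have hNvu : N ∣ v.natAbs * u.natAbs := by
    rw [hprod, mul_dvd_mul_iff_left four_ne_zero] at hdvd
    rwa [← Int.natAbs_mul, ← Int.natCast_dvd]
  obtain ⟨e, f, he, hf, rfl⟩ := exists_dvd_and_dvd_of_dvd_mul hNvu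
  rw [← Int.natCast_dvd] at he hf
  refine ⟨e, f, rfl, ?_, hv ▸ mul_dvd_mul_left 2 he, hu ▸ mul_dvd_mul_left 2 hf⟩
  have heb : IsCoprime (e : ℤ) b := hNb.of_isCoprime_of_dvd_left ⟨f, by push_cast; ring⟩
  have heu : IsCoprime (e : ℤ) u := by
    obtain ⟨v', rfl⟩ := he
    have hb : b = -u + e * v' := by linarith
    rw [hb, IsCoprime.add_mul_left_right_iff, IsCoprime.neg_right_iff] at heb
    exact heb
  exact Nat.isCoprime_iff_coprime.1 (heu.of_isCoprime_of_dvd_right hf)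

lemma QdNh_subset_QdN (d : ℤ) (N : ℕ) (h : ℤ) : QdNh d N h ⊆ QdN d N := by
  rintro M ⟨a, b, c, hM, ha, hdisc, hN, -⟩
  exact ⟨a, b, c, hM, ha, hdisc, hN⟩

lemma mem_Gamma0SL2R_of_maps_QdNh {N : ℕ} (hN : 0 < N) {d h : ℤ} (hNd : IsCoprime (N : ℤ) d)
    {Q Q' : Matrix (Fin 2) (Fin 2) ℝ} (hQ : Q ∈ QdNh d N h) (hQ' : Q' ∈ QdNh d N h)
    {g : SL2R} (hg : g ∈ FrickeGroup N) (hgQ : Q' = (g.1)ᵀ * Q * g.1) :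
    g ∈ Gamma0SL2R N := by
  obtain ⟨e, ⟨f, rfl⟩, hge⟩ := (mem_FrickeGroup_iff hN).1 hg
  obtain ⟨a, b, c, rfl, -, hdisc, ha, hb⟩ := hQ
  obtain ⟨a', b', c', rfl, -, -, -, hb'⟩ := hQ'
  have hNb : IsCoprime ((e * f : ℕ) : ℤ) b := isCoprime_middle_coeff hNd ha hdisc
  obtain ⟨m, rfl⟩ := ha
  obtain ⟨m', b'', c'', hform, hsum, -⟩ :=
    exists_formMat_eq_of_mem_atkinLehnerSet (Nat.pos_of_mul_pos_right hN) hge m b c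
  obtain ⟨-, rfl, -⟩ := formMat_inj.1 (hgQ.trans hform.symm)
  have hdiff : (2 * e : ℤ) ∣ b' - b := by
    have := (ZMod.intCast_eq_intCast_iff_dvd_sub _ _ _).1 (hb.trans hb'.symm)
    push_cast at this
    exact (Dvd.intro (f : ℤ) (by ring)).trans this
  have heb : (e : ℤ) ∣ b := by
    have h2b : (2 * e : ℤ) ∣ 2 * b := by
      have hsub := dvd_sub hsum hdiff
      rwa [show b' + b - (b' - b) = 2 * b by ring] at hsub
    exact (mul_dvd_mul_iff_left two_ne_zero).1 h2b
  have he : IsUnit (e : ℤ) := hNb.isUnit_of_dvd' (by simp) heb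
  obtain rfl : e = 1 := by simpa using Int.isUnit_iff_natAbs_eq.1 he
  exact (coe_Gamma0SL2R _).symm.subset (by simpa using hge)

lemma four_mul_dvd_sq_sub_sq {N : ℕ} {a b c d h : ℤ}
    (hh : (h : ZMod (4 * N)) ^ 2 = ((-d : ℤ) : ZMod (4 * N))) (hNa : (N : ℤ) ∣ a)
    (hdisc : b ^ 2 - 4 * a * c = -d) : (4 * N : ℤ) ∣ h ^ 2 - b ^ 2 := by
  obtain ⟨m, rfl⟩ := hNa
  rw [← Int.cast_pow, ZMod.intCast_eq_intCast_iff_dvd_sub] at hh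
  have hdh : (4 * N : ℤ) ∣ -d - h ^ 2 := by exact_mod_cast hh
  rw [show h ^ 2 - b ^ 2 = 4 * N * -(m * c) - (-d - h ^ 2) by linear_combination -hdisc]
  exact dvd_sub (dvd_mul_right _ _) hdh

lemma mul_mul_dvd_of_isCoprime {R : Type*} [CommRing R] {k x y n : R} (hxy : IsCoprime x y)
    (hx : k * x ∣ n) (hy : k * y ∣ n) : k * (x * y) ∣ n := by
  obtain ⟨u, v, huv⟩ := hxy
  obtain ⟨s, hs⟩ := hx
  obtain ⟨t, ht⟩ := hy
  exact ⟨u * t + v * s, by linear_combination -n * huv + u * x * ht + v * y * hs⟩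

lemma exists_mem_QdNh_formRel {N : ℕ} (hN : 0 < N) {d h : ℤ} (hd : 0 < d)
    (hNd : IsCoprime (N : ℤ) d) (hh : (h : ZMod (4 * N)) ^ 2 = ((-d : ℤ) : ZMod (4 * N)))
    (Q : QdN d N) :
    ∃ Q' : QdN d N, Q'.1 ∈ QdNh d N h ∧ formRel (FrickeGroup N) (QdN d N) Q Q' := by
  obtain ⟨_, a, b, c, rfl, ha, hdisc, hNa⟩ := Q
  obtain ⟨e, f, rfl, hef, hadd, hsub⟩ := exists_coprime_mul_eq_of_four_mul_dvd_sq_sub_sq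
    (isCoprime_middle_coeff hNd hNa hdisc) (four_mul_dvd_sq_sub_sq hh hNa hdisc)
  have he : 0 < e := Nat.pos_of_mul_pos_right hN
  obtain ⟨g, hg⟩ := (nonempty_atkinLehnerSet_iff he).2 hef
  obtain ⟨m, rfl⟩ := hNa
  obtain ⟨m', b', c', hform, hadd', hsub'⟩ := exists_formMat_eq_of_mem_atkinLehnerSet he hg m b c
  have hb' : (2 * (e * f) : ℤ) ∣ h - b' :=
    mul_mul_dvd_of_isCoprime (Nat.isCoprime_iff_coprime.2 hef)
      (by simpa using dvd_sub hadd hadd') (by simpa using dvd_sub hsub hsub')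
  have hQ' : formMat ((e * f : ℕ) * m') b' c' ∈ QdNh d (e * f) h := by
    refine ⟨_, b', c', rfl, leading_coeff_pos_of_formMat_eq hform ha (by linarith),
      (discr_eq_of_formMat_eq hform).trans hdisc, dvd_mul_right _ _, ?_⟩
    rw [ZMod.intCast_eq_intCast_iff_dvd_sub]
    exact_mod_cast hb'
  exact ⟨⟨_, QdNh_subset_QdN _ _ _ hQ'⟩, hQ', g,
    (mem_FrickeGroup_iff hN).2 ⟨e, dvd_mul_right e f, hg⟩, hform⟩

theorem orbit_bijection_prime_level_general {N : ℕ} (hN : 0 < N) {d : ℤ} (hd : 0 < d)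
    (hNd : IsCoprime (N : ℤ) d) {h : ℤ}
    (hh : (h : ZMod (4 * N)) ^ 2 = ((-d : ℤ) : ZMod (4 * N))) :
    ∃ F : Quot (formRel (Gamma0SL2R N) (QdNh d N h)) →
        Quot (formRel (FrickeGroup N) (QdN d N)),
      Function.Bijective F ∧
      (∀ (Q : Matrix (Fin 2) (Fin 2) ℝ) (hQ : Q ∈ QdNh d N h) (hQ' : Q ∈ QdN d N),
        F (Quot.mk _ ⟨Q, hQ⟩) = Quot.mk _ ⟨Q, hQ'⟩) ∧
      (∀ Q ∈ QdNh d N h, stabOrder (Gamma0SL2R N) Q = stabOrder (FrickeGroup N) Q) := by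
  refine ⟨Quot.map (fun Q => ⟨Q.1, QdNh_subset_QdN d N h Q.2⟩) ?_, ⟨?_, ?_⟩,
    fun _ _ _ => rfl, fun Q hQ => stabOrder_congr fun g hgQ => ?_⟩
  · rintro Q Q' ⟨g, hg, hgQ⟩
    exact ⟨g, Gamma0SL2R_le_FrickeGroup N hg, hgQ⟩
  · rintro ⟨Q⟩ ⟨Q'⟩ hQQ'
    obtain ⟨g, hg, hgQ⟩ := ((formRel_equivalence _ _).quot_mk_eq_iff _ _).1 hQQ'
    exact Quot.sound ⟨g, mem_Gamma0SL2R_of_maps_QdNh hN hNd Q.2 Q'.2 hg hgQ, hgQ⟩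
  · rintro ⟨Q⟩
    obtain ⟨Q', hQ', hrel⟩ := exists_mem_QdNh_formRel hN hd hNd hh Q
    exact ⟨Quot.mk _ ⟨Q'.1, hQ'⟩, (Quot.sound hrel).symm⟩
  · exact ⟨(Gamma0SL2R_le_FrickeGroup N ·),
      (mem_Gamma0SL2R_of_maps_QdNh hN hNd hQ hQ · hgQ.symm)⟩

/-- **Orbit bijection in the proof of Lemma 4.2.** For `p` prime, `p ∤ d`, and
`h² ≡ -d (mod 4p)`, the inclusion `𝒬_{d,p,h} ⊆ 𝒬_{d,p}` induces a bijection
`𝒬_{d,p,h}/Γ₀(p) → 𝒬_{d,p}/Γ₀*(p)` preserving the orders of the stabilizers. -/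
theorem orbit_bijection_prime_level (p : ℕ) (hp : p.Prime)
    (d : ℤ) (hd : 0 < d) (hpd : ¬ (p : ℤ) ∣ d)
    (h : ℤ) (hh : (h : ZMod (4 * p)) ^ 2 = ((-d : ℤ) : ZMod (4 * p))) :
    ∃ F : Quot (formRel (Gamma0SL2R p) (QdNh d p h)) →
        Quot (formRel (FrickeGroup p) (QdN d p)),
      Function.Bijective F ∧
      (∀ (Q : Matrix (Fin 2) (Fin 2) ℝ) (hQ : Q ∈ QdNh d p h) (hQ' : Q ∈ QdN d p),
        F (Quot.mk _ ⟨Q, hQ⟩) = Quot.mk _ ⟨Q, hQ'⟩) ∧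
      (∀ Q ∈ QdNh d p h, stabOrder (Gamma0SL2R p) Q = stabOrder (FrickeGroup p) Q) :=
  orbit_bijection_prime_level_general hp.pos hd
    ((Nat.prime_iff_prime_int.1 hp).coprime_iff_not_dvd.2 hpd) hh
end
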